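/- arXiv:2201.01485 — 9 statements merged into one kernel-verified Lean document; each statement's English description precedes it below -/
import Mathlib

section
/- Let E be the Euclidean space ℝ^d (d ≥ 1), let y ∈ E and θ > 0, and define F : E → ℝ by F(z) = (1/2)·‖y − z‖² + θ·‖z‖. Define η(y) = (1 − θ/‖y‖)·y if ‖y‖ ≥ θ and η(y) = 0 if ‖y‖ < θ. Then η(y) is the unique global minimizer of F: for every z ∈ E with z ≠ η(y), one has F(η(y)) < F(z). -/
/-- Block soft-thresholding is the unique global minimizer of the group-LASSO objective
`F z = (1/2)·‖y − z‖² + θ·‖z‖` on Euclidean space `ℝ^d`. -/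
theorem blockSoftThresholding_unique_min
    (d : ℕ) (hd : 1 ≤ d) (y : EuclideanSpace ℝ (Fin d)) (θ : ℝ) (hθ : 0 < θ)
    (F : EuclideanSpace ℝ (Fin d) → ℝ)
    (hF : ∀ z, F z = (1 / 2) * ‖y - z‖ ^ 2 + θ * ‖z‖)
    (η : EuclideanSpace ℝ (Fin d))
    (hη : η = if θ ≤ ‖y‖ then (1 - θ / ‖y‖) • y else 0) :
    ∀ z, z ≠ η → F η < F z := by
  intro z hz
  have key : ‖y - η‖ ≤ θ ∧ inner ℝ (y - η) η = θ * ‖η‖ := by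
    by_cases h : θ ≤ ‖y‖
    · have hN : 0 < ‖y‖ := lt_of_lt_of_le hθ h
      rw [if_pos h] at hη
      have h1 : y - η = (θ / ‖y‖) • y := by rw [hη]; module
      have hc : 0 ≤ 1 - θ / ‖y‖ := by
        rw [sub_nonneg, div_le_one hN]; exact h
      rw [h1]
      constructor
      · rw [norm_smul, Real.norm_of_nonneg (by positivity)]
        apply le_of_eq; field_simp
      · rw [hη, norm_smul, Real.norm_of_nonneg hc, real_inner_smul_left,
          real_inner_smul_right, real_inner_self_eq_norm_sq]
        field_simp
    · rw [if_neg h] at hη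
      subst hη
      simp only [sub_zero, inner_zero_right, norm_zero, mul_zero, and_true]
      exact (not_le.mp h).le
  obtain ⟨k1, k2⟩ := key
  have hpos : 0 < ‖z - η‖ := norm_pos_iff.mpr (sub_ne_zero.mpr hz)
  have e : ‖y - z‖ ^ 2 = ‖y - η‖ ^ 2 - 2 * inner ℝ (y - η) (z - η) + ‖z - η‖ ^ 2 := by
    rw [← norm_sub_sq_real]; congr 2; abel
  have c : inner ℝ (y - η) z ≤ θ * ‖z‖ :=
    (real_inner_le_norm _ _).trans (mul_le_mul_of_nonneg_right k1 (norm_nonneg _))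
  rw [hF, hF, e, inner_sub_right, k2]
  nlinarith [pow_pos hpos 2]
end

section
/- Fix an integer M ≥ 1 and a real τ > 0, and define ξ(θ) = (θ·Γ̄(M, (θ/τ)²) − τ·Γ̄(M + 1/2, (θ/τ)²)) / Γ(M) and ϖ(θ) = (θ²·Γ̄(M, (θ/τ)²) − 2θτ·Γ̄(M + 1/2, (θ/τ)²) + τ²·Γ̄(M + 1, (θ/τ)²)) / Γ(M) for θ ≥ 0. Then for every θ > 0, ϖ is differentiable at θ with derivative ϖ'(θ) = 2·ξ(θ). -/
/-- The upper incomplete gamma function `Γ̄(s, x) = ∫_x^∞ t^{s-1} e^{-t} dt`. -/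
noncomputable def uGamma (s x : ℝ) : ℝ := ∫ t in Set.Ioi x, t ^ (s - 1) * Real.exp (-t)

theorem uGamma_hasDerivAt_aux (s x : ℝ) (hs : 0 < s) (hx : 0 < x) :
    HasDerivAt (uGamma s) (-(x ^ (s - 1) * Real.exp (-x))) x := by
  have hint : MeasureTheory.IntegrableOn (fun t : ℝ => t ^ (s - 1) * Real.exp (-t))
      (Set.Ioi 0) := by
    refine (Real.GammaIntegral_convergent hs).congr_fun (fun t _ => ?_) measurableSet_Ioi
    simp only [mul_comm]
  have hcont : ∀ y : ℝ, 0 < y → ContinuousAt (fun t : ℝ => t ^ (s - 1) * Real.exp (-t)) y := by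
    intro y hy
    exact (Real.continuousAt_rpow_const y (s - 1) (Or.inl hy.ne')).mul
      (Real.continuous_exp.comp continuous_neg).continuousAt
  have hii : IntervalIntegrable (fun t : ℝ => t ^ (s - 1) * Real.exp (-t))
      MeasureTheory.volume 0 x := by
    rw [intervalIntegrable_iff_integrableOn_Ioc_of_le hx.le]
    exact hint.mono_set Set.Ioc_subset_Ioi_self
  have hmeas : StronglyMeasurableAtFilter (fun t : ℝ => t ^ (s - 1) * Real.exp (-t))
      (nhds x) MeasureTheory.volume :=
    ContinuousAt.stronglyMeasurableAtFilter isOpen_Ioi (s := Set.Ioi 0)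
      (fun y hy => hcont y hy) x hx
  have hd := (intervalIntegral.integral_hasDerivAt_right hii hmeas (hcont x hx)).const_sub
    (uGamma s 0)
  refine hd.congr_of_eventuallyEq ?_
  filter_upwards [Ioi_mem_nhds hx] with y hy
  have := intervalIntegral.integral_Ioi_sub_Ioi hint (le_of_lt (Set.mem_Ioi.1 hy))
  unfold uGamma
  linarith


/-- For `M ≥ 1` and `τ > 0`, the worst-case MSE contribution
`ϖ(θ) = (θ²·Γ̄(M,(θ/τ)²) − 2θτ·Γ̄(M+1/2,(θ/τ)²) + τ²·Γ̄(M+1,(θ/τ)²)) / Γ(M)`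
is differentiable at every `θ > 0` with derivative `2·ξ(θ)`, where
`ξ(θ) = (θ·Γ̄(M,(θ/τ)²) − τ·Γ̄(M+1/2,(θ/τ)²)) / Γ(M)`. -/
theorem varpi_hasDerivAt
    (M : ℕ) (hM : 1 ≤ M) (τ : ℝ) (hτ : 0 < τ) (ξ ϖ : ℝ → ℝ)
    (hξ : ∀ θ, ξ θ = (θ * uGamma M ((θ / τ) ^ 2) - τ * uGamma (M + 1 / 2) ((θ / τ) ^ 2))
      / Real.Gamma M)
    (hϖ : ∀ θ, ϖ θ = (θ ^ 2 * uGamma M ((θ / τ) ^ 2)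
      - 2 * θ * τ * uGamma (M + 1 / 2) ((θ / τ) ^ 2)
      + τ ^ 2 * uGamma (M + 1) ((θ / τ) ^ 2)) / Real.Gamma M) :
    ∀ θ > 0, HasDerivAt ϖ (2 * ξ θ) θ := by
  intro θ hθ
  have hMr : (1 : ℝ) ≤ M := by exact_mod_cast hM
  have hr : 0 < θ / τ := div_pos hθ hτ
  have hy : 0 < (θ / τ) ^ 2 := by positivity
  have hq : HasDerivAt (fun θ : ℝ => (θ / τ) ^ 2) (2 * (θ / τ) * (1 / τ)) θ := by
    have h := ((hasDerivAt_id θ).div_const τ).pow 2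
    refine HasDerivAt.congr_deriv (f := fun θ : ℝ => (θ / τ) ^ 2) h ?_
    simp
  have h1 := (uGamma_hasDerivAt_aux M _ (by linarith) hy).comp θ hq
  have h2 := (uGamma_hasDerivAt_aux (M + 1 / 2) _ (by linarith) hy).comp θ hq
  have h3 := (uGamma_hasDerivAt_aux (M + 1) _ (by linarith) hy).comp θ hq
  have e2 : ((θ / τ) ^ 2) ^ ((M : ℝ) + 1 / 2 - 1) = ((θ / τ) ^ 2) ^ ((M : ℝ) - 1) * (θ / τ) := by
    rw [show (M : ℝ) + 1 / 2 - 1 = (M - 1) + 1 / 2 by ring, Real.rpow_add hy,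
      ← Real.sqrt_eq_rpow, Real.sqrt_sq hr.le]
  have e3 : ((θ / τ) ^ 2) ^ ((M : ℝ) + 1 - 1) = ((θ / τ) ^ 2) ^ ((M : ℝ) - 1) * (θ / τ) ^ 2 := by
    rw [show (M : ℝ) + 1 - 1 = (M - 1) + 1 by ring, Real.rpow_add hy, Real.rpow_one]
  rw [e2] at h2
  rw [e3] at h3
  have hid := hasDerivAt_id θ
  have hfin := (((((hid.pow 2).mul h1).sub (((hid.const_mul 2).mul_const τ).mul h2)).add
    (h3.const_mul (τ ^ 2))).div_const (Real.Gamma M))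
  have hf : ϖ = _ := funext hϖ
  rw [hf, hξ]
  refine HasDerivAt.congr_deriv (f := fun θ : ℝ => _) hfin ?_
  generalize ((θ / τ) ^ 2) ^ ((M : ℝ) - 1) = A
  simp only [Function.comp, id, Pi.pow_apply]
  generalize Real.exp _ = B
  generalize uGamma _ _ = C
  generalize uGamma _ _ = D
  field_simp
  ring
end

section
/- Fix an integer M ≥ 1, a real τ > 0, and constants c₁ > 0 and c₂ > 0. Define ξ(θ) = (θ·Γ̄(M, (θ/τ)²) − τ·Γ̄(M + 1/2, (θ/τ)²)) / Γ(M) and f(θ) = c₁·ξ(θ) + c₂·θ for θ ≥ 0. Then f is strictly increasing on [0, ∞), and f(0) = −c₁·τ·Γ(M + 1/2)/Γ(M) < 0. -/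
lemma uG_int (s x : ℝ) (hs : 0 < s) (hx : 0 ≤ x) :
    MeasureTheory.IntegrableOn (fun t : ℝ => t ^ (s - 1) * Real.exp (-t)) (Set.Ioi x) := by
  have h := Real.GammaIntegral_convergent hs
  refine (h.mono_set (Set.Ioi_subset_Ioi hx)).congr_fun (fun t _ => ?_) measurableSet_Ioi
  simp only [mul_comm]

lemma uG_zero (s : ℝ) (hs : 0 < s) : uGamma s 0 = Real.Gamma s := by
  rw [Real.Gamma_eq_integral hs, uGamma]
  simp only [mul_comm]

lemma uG_comb_int (s x τ θ : ℝ) (hs : 0 < s) (hx : 0 ≤ x) :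
    MeasureTheory.IntegrableOn (fun t : ℝ => θ * (t ^ (s - 1) * Real.exp (-t))
      - τ * (t ^ (s + 1 / 2 - 1) * Real.exp (-t))) (Set.Ioi x) :=
  ((uG_int s x hs hx).const_mul θ).sub ((uG_int (s + 1/2) x (by linarith) hx).const_mul τ)

lemma uG_comb (s x τ θ : ℝ) (hs : 0 < s) (hx : 0 ≤ x) :
    θ * uGamma s x - τ * uGamma (s + 1 / 2) x = ∫ t in Set.Ioi x,
      (θ * (t ^ (s - 1) * Real.exp (-t)) - τ * (t ^ (s + 1 / 2 - 1) * Real.exp (-t))) := by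
  rw [MeasureTheory.integral_sub ((uG_int s x hs hx).const_mul θ)
    ((uG_int (s + 1/2) x (by linarith) hx).const_mul τ),
    MeasureTheory.integral_const_mul, MeasureTheory.integral_const_mul]
  rfl

lemma uG_fac (s τ θ t : ℝ) (ht : 0 < t) :
    θ * (t ^ (s - 1) * Real.exp (-t)) - τ * (t ^ (s + 1 / 2 - 1) * Real.exp (-t))
      = (θ - τ * Real.sqrt t) * (t ^ (s - 1) * Real.exp (-t)) := by
  have : t ^ (s + 1 / 2 - 1) = Real.sqrt t * t ^ (s - 1) := by
    rw [Real.sqrt_eq_rpow, ← Real.rpow_add ht]; congr 1; ring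
  rw [this]; ring

lemma uG_mono (s τ a b : ℝ) (hs : 0 < s) (hτ : 0 < τ) (ha : 0 ≤ a) (hab : a ≤ b) :
    a * uGamma s ((a / τ) ^ 2) - τ * uGamma (s + 1 / 2) ((a / τ) ^ 2)
      ≤ b * uGamma s ((b / τ) ^ 2) - τ * uGamma (s + 1 / 2) ((b / τ) ^ 2) := by
  have hxx : (a / τ) ^ 2 ≤ (b / τ) ^ 2 := by gcongr
  have hxa : 0 ≤ (a / τ) ^ 2 := by positivity
  have hxb : 0 ≤ (b / τ) ^ 2 := by positivity
  rw [uG_comb _ _ _ _ hs hxa, uG_comb _ _ _ _ hs hxb]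
  have h1 := MeasureTheory.setIntegral_mono_set
    (f := fun t : ℝ => -(a * (t ^ (s - 1) * Real.exp (-t))
      - τ * (t ^ (s + 1 / 2 - 1) * Real.exp (-t))))
    (uG_comb_int s _ τ a hs hxa).neg ?_ (Set.Ioi_subset_Ioi hxx).eventuallyLE
  · rw [MeasureTheory.integral_neg, MeasureTheory.integral_neg] at h1
    refine (neg_le_neg_iff.1 h1).trans ?_
    refine MeasureTheory.setIntegral_mono_on (uG_comb_int s _ τ a hs hxb)
      (uG_comb_int s _ τ b hs hxb) measurableSet_Ioi (fun t ht => ?_)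
    have ht0 : 0 < t := lt_of_le_of_lt hxb ht
    gcongr
  · refine (MeasureTheory.ae_restrict_iff' measurableSet_Ioi).2
      (Filter.Eventually.of_forall fun t ht => ?_)
    have ht0 : 0 < t := lt_of_le_of_lt hxa ht
    have h2 : a / τ ≤ Real.sqrt t := Real.le_sqrt_of_sq_le (le_of_lt ht)
    rw [div_le_iff₀ hτ] at h2
    simp only [Pi.zero_apply]
    rw [uG_fac s τ a t ht0, ← neg_mul]
    have : 0 ≤ -(a - τ * Real.sqrt t) := by linarith
    positivity

/-- For `M ≥ 1`, `τ > 0`, `c₁, c₂ > 0`, the function `f(θ) = c₁·ξ(θ) + c₂·θ`, with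
`ξ(θ) = (θ·Γ̄(M,(θ/τ)²) − τ·Γ̄(M+1/2,(θ/τ)²)) / Γ(M)`, is strictly increasing on `[0,∞)`
and `f(0) = −c₁·τ·Γ(M+1/2)/Γ(M) < 0`. -/
theorem f_strictMonoOn_and_neg_at_zero
    (M : ℕ) (hM : 1 ≤ M) (τ : ℝ) (hτ : 0 < τ) (c₁ c₂ : ℝ) (hc₁ : 0 < c₁) (hc₂ : 0 < c₂)
    (ξ f : ℝ → ℝ)
    (hξ : ∀ θ, ξ θ = (θ * uGamma M ((θ / τ) ^ 2) - τ * uGamma (M + 1 / 2) ((θ / τ) ^ 2))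
      / Real.Gamma M)
    (hf : ∀ θ, f θ = c₁ * ξ θ + c₂ * θ) :
    StrictMonoOn f (Set.Ici 0) ∧
      f 0 = -(c₁ * τ * Real.Gamma (M + 1 / 2) / Real.Gamma M) ∧ f 0 < 0 := by
  have hM0 : (0 : ℝ) < M := by exact_mod_cast hM
  have hG := Real.Gamma_pos_of_pos hM0
  have hG' : 0 < Real.Gamma ((M : ℝ) + 1 / 2) := Real.Gamma_pos_of_pos (by positivity)
  have h0 : f 0 = -(c₁ * τ * Real.Gamma (M + 1 / 2) / Real.Gamma M) := by
    rw [hf, hξ, zero_div, zero_pow two_ne_zero, uG_zero _ (by positivity),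
      uG_zero _ (by positivity)]
    ring
  refine ⟨fun a ha b hb hab => ?_, h0, ?_⟩
  · rw [hf, hf, hξ, hξ]
    have h := uG_mono M τ a b hM0 hτ ha hab.le
    refine add_lt_add_of_le_of_lt ?_ (mul_lt_mul_of_pos_left hab hc₂)
    gcongr
  · rw [h0, neg_lt_zero]
    positivity
end

section
/- Fix an integer M ≥ 1, a real τ > 0, and constants c₁ > 0 and c₂ > 0. Define ξ(θ) = (θ·Γ̄(M, (θ/τ)²) − τ·Γ̄(M + 1/2, (θ/τ)²)) / Γ(M) and f(θ) = c₁·ξ(θ) + c₂·θ for θ ≥ 0. Then there exists a unique θ* > 0 such that f(θ*) = 0. -/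
open MeasureTheory Set in
theorem gint (s : ℝ) (hs : 0 < s) :
    IntegrableOn (fun t : ℝ => t ^ (s - 1) * Real.exp (-t)) (Ioi 0) := by
  have := Real.GammaIntegral_convergent hs
  simpa only [mul_comm] using this

open MeasureTheory Set in
theorem key_eq (m τ θ : ℝ) (hm : 0 < m) (hτ : 0 < τ) (hθ : 0 ≤ θ) :
    θ * uGamma m ((θ / τ) ^ 2) - τ * uGamma (m + 1 / 2) ((θ / τ) ^ 2) =
    - ∫ t in Ioi (0:ℝ), max (τ * (t ^ (m + 1 / 2 - 1) * Real.exp (-t))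
        - θ * (t ^ (m - 1) * Real.exp (-t))) 0 := by
  have hsub : Ioi ((θ / τ) ^ 2) ⊆ Ioi (0:ℝ) := Ioi_subset_Ioi (sq_nonneg _)
  have hA := (gint (m + 1 / 2) (by linarith)).mono_set hsub
  have hW := (gint m hm).mono_set hsub
  have hfac : ∀ t : ℝ, 0 < t → t ^ (m + 1 / 2 - 1) = √t * t ^ (m - 1) := by
    intro t ht
    rw [Real.sqrt_eq_rpow, ← Real.rpow_add ht]
    congr 1; ring
  have hd : ∀ t : ℝ, 0 < t → τ * (t ^ (m + 1 / 2 - 1) * Real.exp (-t))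
        - θ * (t ^ (m - 1) * Real.exp (-t)) =
        (τ * √t - θ) * (t ^ (m - 1) * Real.exp (-t)) := by
    intro t ht
    rw [hfac t ht]; ring
  have hwp : ∀ t : ℝ, 0 < t → 0 < t ^ (m - 1) * Real.exp (-t) := by
    intro t ht
    positivity
  have hq : 0 ≤ θ / τ := by positivity
  rw [setIntegral_eq_of_subset_of_forall_sdiff_eq_zero measurableSet_Ioi hsub]
  · have : ∫ t in Ioi ((θ / τ) ^ 2), max (τ * (t ^ (m + 1 / 2 - 1) * Real.exp (-t))
        - θ * (t ^ (m - 1) * Real.exp (-t))) 0 =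
        ∫ t in Ioi ((θ / τ) ^ 2), (τ * (t ^ (m + 1 / 2 - 1) * Real.exp (-t))
        - θ * (t ^ (m - 1) * Real.exp (-t))) := by
      apply setIntegral_congr_fun measurableSet_Ioi
      intro t ht
      have ht0 : 0 < t := hsub ht
      apply max_eq_left
      rw [hd t ht0]
      apply mul_nonneg _ (hwp t ht0).le
      have h1 : θ / τ < √t := Real.lt_sqrt_of_sq_lt ht
      rw [div_lt_iff₀ hτ] at h1
      nlinarith
    rw [this, integral_sub (hA.const_mul τ) (hW.const_mul θ), integral_const_mul,
      integral_const_mul]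
    unfold uGamma
    ring
  · rintro t ⟨ht0, ht⟩
    have ht0' : 0 < t := ht0
    apply max_eq_right
    rw [hd t ht0']
    apply mul_nonpos_of_nonpos_of_nonneg _ (hwp t ht0').le
    have h1 : √t ≤ θ / τ := Real.sqrt_le_iff.2 ⟨hq, by simpa using ht⟩
    rw [le_div_iff₀ hτ] at h1
    nlinarith

open MeasureTheory Set in
/-- Existence and uniqueness part of Theorem 2 of the paper: for `M ≥ 1`, `τ > 0`,
`c₁, c₂ > 0`, the function `f(θ) = c₁·ξ(θ) + c₂·θ`, with
`ξ(θ) = (θ·Γ̄(M,(θ/τ)²) − τ·Γ̄(M+1/2,(θ/τ)²)) / Γ(M)`, has a unique positive root. -/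
theorem f_exists_unique_pos_root
    (M : ℕ) (hM : 1 ≤ M) (τ : ℝ) (hτ : 0 < τ) (c₁ c₂ : ℝ) (hc₁ : 0 < c₁) (hc₂ : 0 < c₂)
    (ξ f : ℝ → ℝ)
    (hξ : ∀ θ, ξ θ = (θ * uGamma M ((θ / τ) ^ 2) - τ * uGamma (M + 1 / 2) ((θ / τ) ^ 2))
      / Real.Gamma M)
    (hf : ∀ θ, f θ = c₁ * ξ θ + c₂ * θ) :
    ∃! θstar : ℝ, 0 < θstar ∧ f θstar = 0 := by
  have hm : (0:ℝ) < M := by exact_mod_cast hM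
  have hΓ : 0 < Real.Gamma M := Real.Gamma_pos_of_pos hm
  have hA := gint ((M:ℝ) + 1 / 2) (by linarith)
  have hW := gint (M:ℝ) hm
  have hint : ∀ θ : ℝ, IntegrableOn (fun t : ℝ => max (τ * (t ^ ((M:ℝ) + 1 / 2 - 1) *
      Real.exp (-t)) - θ * (t ^ ((M:ℝ) - 1) * Real.exp (-t))) 0) (Ioi 0) := fun θ =>
    ((hA.const_mul τ).sub (hW.const_mul θ)).pos_part
  obtain ⟨G, hG⟩ : ∃ G : ℝ → ℝ, ∀ θ, G θ = ∫ t in Ioi (0:ℝ), max (τ * (t ^ ((M:ℝ) + 1 / 2 - 1) *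
      Real.exp (-t)) - θ * (t ^ ((M:ℝ) - 1) * Real.exp (-t))) 0 := ⟨_, fun _ => rfl⟩
  have hwp : ∀ t : ℝ, 0 < t → 0 < t ^ ((M:ℝ) - 1) * Real.exp (-t) := by
    intro t ht
    positivity
  have hfG : ∀ θ, 0 ≤ θ → f θ = c₂ * θ - c₁ / Real.Gamma M * G θ := by
    intro θ hθ
    rw [hf, hξ, key_eq M τ θ hm hτ hθ, hG]
    ring
  have hanti : Antitone G := by
    intro a b hab
    rw [hG, hG]
    apply setIntegral_mono_on (hint b) (hint a) measurableSet_Ioi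
    intro t ht
    have := mul_le_mul_of_nonneg_right hab (hwp t ht).le
    exact max_le_max (by linarith) le_rfl
  have hGc : Continuous G := by
    set I := ∫ t in Ioi (0:ℝ), t ^ ((M:ℝ) - 1) * Real.exp (-t) with hI
    have hI0 : 0 ≤ I := setIntegral_nonneg measurableSet_Ioi fun t ht => (hwp t ht).le
    refine (LipschitzWith.of_le_add_mul ⟨I, hI0⟩ ?_).continuous
    intro a b
    change G a ≤ G b + I * dist a b
    rw [hG, hG, hI, ← integral_mul_const, ← integral_add (hint b) (hW.mul_const _)]
    apply setIntegral_mono_on (hint a) ((hint b).add (hW.mul_const _)) measurableSet_Ioi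
    intro t ht
    simp only [Pi.add_apply]
    have hw := (hwp t ht).le
    have h1 : b - a ≤ dist a b := by
      rw [dist_comm]; exact le_abs_self _
    have h2 := mul_le_mul_of_nonneg_right h1 hw
    have h3 : 0 ≤ t ^ ((M:ℝ) - 1) * Real.exp (-t) * dist a b := mul_nonneg hw dist_nonneg
    apply max_le
    · have := le_max_left (τ * (t ^ ((M:ℝ) + 1 / 2 - 1) *
        Real.exp (-t)) - b * (t ^ ((M:ℝ) - 1) * Real.exp (-t))) 0
      linarith
    · have := le_max_right (τ * (t ^ ((M:ℝ) + 1 / 2 - 1) *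
        Real.exp (-t)) - b * (t ^ ((M:ℝ) - 1) * Real.exp (-t))) 0
      linarith
  have hG0 : 0 < G 0 := by
    have h := key_eq M τ 0 hm hτ le_rfl
    rw [← hG] at h
    have h2 : uGamma ((M:ℝ) + 1 / 2) 0 = Real.Gamma ((M:ℝ) + 1 / 2) := by
      rw [Real.Gamma_eq_integral (by linarith)]
      unfold uGamma
      simp only [mul_comm]
    have h3 : 0 < Real.Gamma ((M:ℝ) + 1 / 2) := Real.Gamma_pos_of_pos (by linarith)
    have h4 : ((0:ℝ) / τ) ^ 2 = 0 := by simp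
    rw [h4, h2] at h
    have := mul_pos hτ h3
    linarith
  have hk : 0 < c₁ / Real.Gamma M := by positivity
  set k := c₁ / Real.Gamma M with hkdef
  set F : ℝ → ℝ := fun θ => c₂ * θ - k * G θ with hF
  have hFc : Continuous F := by fun_prop
  have hFm : StrictMono F := by
    intro a b hab
    have h1 := mul_le_mul_of_nonneg_left (hanti hab.le) hk.le
    have h2 := mul_lt_mul_of_pos_left hab hc₂
    simp only [hF]
    linarith
  have hF0 : F 0 < 0 := by
    simp only [hF]
    have := mul_pos hk hG0
    linarith
  have hb : 0 ≤ k * G 0 / c₂ := by positivity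
  have hFb : 0 ≤ F (k * G 0 / c₂) := by
    have h1 := mul_le_mul_of_nonneg_left (hanti hb) hk.le
    have h2 : c₂ * (k * G 0 / c₂) = k * G 0 := by field_simp
    simp only [hF]
    linarith
  obtain ⟨x, hx, hx0⟩ := intermediate_value_Icc hb hFc.continuousOn ⟨hF0.le, hFb⟩
  have hxp : 0 < x := by
    rcases hx.1.lt_or_eq with h | h
    · exact h
    · rw [← h] at hx0
      linarith
  refine ⟨x, ⟨hxp, (hfG x hxp.le).trans hx0⟩, ?_⟩
  rintro y ⟨hy, hy0⟩
  rw [hfG y hy.le] at hy0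
  exact hFm.injective (hy0.trans hx0.symm)
end

section
/- Fix an integer M ≥ 1, a real τ > 0, and constants c₁ > 0 and c₂ > 0. Define ξ(θ) = (θ·Γ̄(M, (θ/τ)²) − τ·Γ̄(M + 1/2, (θ/τ)²)) / Γ(M), f(θ) = c₁·ξ(θ) + c₂·θ, ϖ(θ) = (θ²·Γ̄(M, (θ/τ)²) − 2θτ·Γ̄(M + 1/2, (θ/τ)²) + τ²·Γ̄(M + 1, (θ/τ)²)) / Γ(M), and MSE(θ) = c₂·(M·τ² + θ²) + c₁·ϖ(θ) for θ ≥ 0. If θ* > 0 satisfies f(θ*) = 0, then θ* is the unique global minimizer of MSE on [0, ∞): for every θ ≥ 0 with θ ≠ θ*, MSE(θ*) < MSE(θ). -/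
lemma ug_int (s : ℝ) (hs : 0 < s) (x : ℝ) (hx : 0 ≤ x) :
    MeasureTheory.IntegrableOn (fun t : ℝ => t ^ (s - 1) * Real.exp (-t)) (Set.Ioi x) := by
  have h := (Real.GammaIntegral_convergent hs).mono_set (Set.Ioi_subset_Ioi hx)
  simpa only [mul_comm] using h

lemma ug_pt (s t : ℝ) (ht : 0 < t) :
    t ^ (s + 1 / 2 - 1) = Real.sqrt t * t ^ (s - 1) ∧ t ^ (s + 1 - 1) = t * t ^ (s - 1) := by
  constructor
  · rw [Real.sqrt_eq_rpow, ← Real.rpow_add ht]; congr 1; ring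
  · nth_rewrite 2 [← Real.rpow_one t]
    rw [← Real.rpow_add ht]; congr 1; ring

lemma ug_ext (τ θ : ℝ) (hτ : 0 < τ) (hθ : 0 ≤ θ) (n : ℕ) (hn : n ≠ 0) (g h : ℝ → ℝ)
    (hg : ∀ t, g t = (max (τ * Real.sqrt t - θ) 0) ^ n * h t)
    (k : ℝ → ℝ) (hk : ∀ t, 0 < t → k t = (τ * Real.sqrt t - θ) ^ n * h t)
    (hki : MeasureTheory.IntegrableOn k (Set.Ioi ((θ / τ) ^ 2))) :
    MeasureTheory.IntegrableOn g (Set.Ioi 0) ∧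
    ∫ t in Set.Ioi ((θ / τ) ^ 2), k t = ∫ t in Set.Ioi (0:ℝ), g t := by
  have hx : 0 ≤ (θ / τ) ^ 2 := by positivity
  have heq : Set.EqOn k g (Set.Ioi ((θ / τ) ^ 2)) := by
    intro t ht
    have ht' : (θ / τ) ^ 2 < t := ht
    have h1 : θ / τ < Real.sqrt t := Real.lt_sqrt_of_sq_lt ht'
    rw [div_lt_iff₀ hτ] at h1
    rw [hk t (hx.trans_lt ht'), hg, max_eq_left (by linarith)]
  have hz : ∀ t ∈ Set.Ioi (0:ℝ) \ Set.Ioi ((θ / τ) ^ 2), g t = 0 := by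
    intro t ht
    have ht' : t ≤ (θ / τ) ^ 2 := not_lt.1 ht.2
    have h1 : Real.sqrt t ≤ θ / τ := Real.sqrt_le_iff.2 ⟨by positivity, ht'⟩
    rw [le_div_iff₀ hτ] at h1
    rw [hg, max_eq_right (by linarith), zero_pow hn, zero_mul]
  have hgi := hki.congr_fun heq measurableSet_Ioi
  refine ⟨hgi.of_forall_sdiff_eq_zero measurableSet_Ioi hz, ?_⟩
  rw [MeasureTheory.setIntegral_congr_fun measurableSet_Ioi heq]
  exact (MeasureTheory.setIntegral_eq_of_subset_of_forall_sdiff_eq_zero measurableSet_Ioi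
    (Set.Ioi_subset_Ioi hx) hz).symm

lemma ug_one (s τ θ : ℝ) (hs : 0 < s) (hτ : 0 < τ) (hθ : 0 ≤ θ) :
    MeasureTheory.IntegrableOn (fun t : ℝ => (max (τ * Real.sqrt t - θ) 0) ^ 1 *
      (t ^ (s - 1) * Real.exp (-t))) (Set.Ioi 0) ∧
    τ * uGamma (s + 1 / 2) ((θ / τ) ^ 2) - θ * uGamma s ((θ / τ) ^ 2) =
    ∫ t in Set.Ioi (0:ℝ), (max (τ * Real.sqrt t - θ) 0) ^ 1 *
      (t ^ (s - 1) * Real.exp (-t)) := by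
  have hx : 0 ≤ (θ / τ) ^ 2 := by positivity
  have i0 := (ug_int s hs _ hx).const_mul θ
  have i1 := (ug_int (s + 1 / 2) (by linarith) _ hx).const_mul τ
  obtain ⟨h1, h2⟩ := ug_ext τ θ hτ hθ 1 (by norm_num) _ (fun t => t ^ (s - 1) * Real.exp (-t))
    (fun t => rfl) (fun t => τ * (t ^ (s + 1 / 2 - 1) * Real.exp (-t))
      - θ * (t ^ (s - 1) * Real.exp (-t)))
    (fun t ht => by rw [(ug_pt s t ht).1]; ring) (i1.sub i0)
  refine ⟨h1, ?_⟩
  rw [← h2, MeasureTheory.integral_sub i1 i0, MeasureTheory.integral_const_mul,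
    MeasureTheory.integral_const_mul]
  rfl

lemma ug_two (s τ θ : ℝ) (hs : 0 < s) (hτ : 0 < τ) (hθ : 0 ≤ θ) :
    MeasureTheory.IntegrableOn (fun t : ℝ => (max (τ * Real.sqrt t - θ) 0) ^ 2 *
      (t ^ (s - 1) * Real.exp (-t))) (Set.Ioi 0) ∧
    θ ^ 2 * uGamma s ((θ / τ) ^ 2) - 2 * θ * τ * uGamma (s + 1 / 2) ((θ / τ) ^ 2)
      + τ ^ 2 * uGamma (s + 1) ((θ / τ) ^ 2) =
    ∫ t in Set.Ioi (0:ℝ), (max (τ * Real.sqrt t - θ) 0) ^ 2 *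
      (t ^ (s - 1) * Real.exp (-t)) := by
  have hx : 0 ≤ (θ / τ) ^ 2 := by positivity
  have i0 := (ug_int s hs _ hx).const_mul (θ ^ 2)
  have i1 := (ug_int (s + 1 / 2) (by linarith) _ hx).const_mul (2 * θ * τ)
  have i2 := (ug_int (s + 1) (by linarith) _ hx).const_mul (τ ^ 2)
  have i01 : MeasureTheory.Integrable (fun t : ℝ => θ ^ 2 * (t ^ (s - 1) * Real.exp (-t))
      - 2 * θ * τ * (t ^ (s + 1 / 2 - 1) * Real.exp (-t)))
      (MeasureTheory.volume.restrict (Set.Ioi ((θ / τ) ^ 2))) := i0.sub i1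
  have i012 : MeasureTheory.Integrable (fun t : ℝ => θ ^ 2 * (t ^ (s - 1) * Real.exp (-t))
      - 2 * θ * τ * (t ^ (s + 1 / 2 - 1) * Real.exp (-t))
      + τ ^ 2 * (t ^ (s + 1 - 1) * Real.exp (-t)))
      (MeasureTheory.volume.restrict (Set.Ioi ((θ / τ) ^ 2))) := i01.add i2
  obtain ⟨h1, h2⟩ := ug_ext τ θ hτ hθ 2 (by norm_num) _ (fun t => t ^ (s - 1) * Real.exp (-t))
    (fun t => rfl) (fun t => θ ^ 2 * (t ^ (s - 1) * Real.exp (-t))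
      - 2 * θ * τ * (t ^ (s + 1 / 2 - 1) * Real.exp (-t))
      + τ ^ 2 * (t ^ (s + 1 - 1) * Real.exp (-t)))
    (fun t ht => by
      rw [(ug_pt s t ht).1, (ug_pt s t ht).2]
      have := Real.sq_sqrt ht.le
      linear_combination (-(τ ^ 2) * t ^ (s - 1) * Real.exp (-t)) * this) i012
  refine ⟨h1, ?_⟩
  rw [← h2, MeasureTheory.integral_add i01 i2, MeasureTheory.integral_sub i0 i1,
    MeasureTheory.integral_const_mul, MeasureTheory.integral_const_mul,
    MeasureTheory.integral_const_mul]
  rfl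

lemma ug_conv (a x y : ℝ) :
    (max (a - y) 0) ^ 2 + 2 * (y - x) * (max (a - y) 0) ^ 1 ≤ (max (a - x) 0) ^ 2 := by
  rcases le_total (a - y) 0 with h | h <;> rcases le_total (a - x) 0 with h' | h' <;>
    simp only [max_eq_left, max_eq_right, h, h'] <;> nlinarith [sq_nonneg (x - y)]

/-- Optimality part of Theorem 2 of the paper: any positive root `θ*` of
`f(θ) = c₁·ξ(θ) + c₂·θ` is the unique global minimizer on `[0,∞)` of the worst-case MSE
`MSE(θ) = c₂·(M·τ² + θ²) + c₁·ϖ(θ)`. -/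
theorem root_is_unique_min_of_mse
    (M : ℕ) (hM : 1 ≤ M) (τ : ℝ) (hτ : 0 < τ) (c₁ c₂ : ℝ) (hc₁ : 0 < c₁) (hc₂ : 0 < c₂)
    (ξ f ϖ MSE : ℝ → ℝ)
    (hξ : ∀ θ, ξ θ = (θ * uGamma M ((θ / τ) ^ 2) - τ * uGamma (M + 1 / 2) ((θ / τ) ^ 2))
      / Real.Gamma M)
    (hf : ∀ θ, f θ = c₁ * ξ θ + c₂ * θ)
    (hϖ : ∀ θ, ϖ θ = (θ ^ 2 * uGamma M ((θ / τ) ^ 2)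
      - 2 * θ * τ * uGamma (M + 1 / 2) ((θ / τ) ^ 2)
      + τ ^ 2 * uGamma (M + 1) ((θ / τ) ^ 2)) / Real.Gamma M)
    (hMSE : ∀ θ, MSE θ = c₂ * (M * τ ^ 2 + θ ^ 2) + c₁ * ϖ θ)
    (θstar : ℝ) (hθstar : 0 < θstar) (hroot : f θstar = 0) :
    ∀ θ : ℝ, 0 ≤ θ → θ ≠ θstar → MSE θstar < MSE θ := by
  intro θ hθ hne
  have hs : (0:ℝ) < M := by exact_mod_cast hM
  have hG : 0 < Real.Gamma M := Real.Gamma_pos_of_pos hs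
  obtain ⟨a1, a2⟩ := ug_one M τ θstar hs hτ hθstar.le
  obtain ⟨b1, b2⟩ := ug_two M τ θstar hs hτ hθstar.le
  obtain ⟨d1, d2⟩ := ug_two M τ θ hs hτ hθ
  have key := MeasureTheory.setIntegral_mono_on (b1.add (a1.const_mul (2 * (θstar - θ)))) d1
    measurableSet_Ioi (fun t ht => by
      have ht' : (0:ℝ) < t := ht
      have hw : 0 ≤ t ^ ((M:ℝ) - 1) * Real.exp (-t) := by positivity
      have := mul_le_mul_of_nonneg_right (ug_conv (τ * Real.sqrt t) θ θstar) hw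
      simp only [Pi.add_apply]
      linarith)
  simp only [Pi.add_apply] at key
  rw [MeasureTheory.integral_add b1 (a1.const_mul _), MeasureTheory.integral_const_mul,
    ← a2, ← b2, ← d2] at key
  have key2 : ϖ θstar - 2 * (θstar - θ) * ξ θstar ≤ ϖ θ := by
    rw [hϖ, hϖ, hξ, mul_div_assoc', ← sub_div]
    apply div_le_div_of_nonneg_right _ hG.le
    linarith
  have key3 := mul_le_mul_of_nonneg_left key2 hc₁.le
  have hpos : 0 < c₂ * (θ - θstar) ^ 2 := by
    have := sub_ne_zero.2 hne
    positivity
  rw [hf] at hroot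
  rw [hMSE, hMSE]
  have h5 : (θstar - θ) * (c₁ * ξ θstar + c₂ * θstar) = 0 := by rw [hroot, mul_zero]
  nlinarith
end

section
/- Fix an integer M ≥ 1 and let μ be the product probability measure on ℝ^{2M} whose 2M coordinates are i.i.d. real Gaussians with mean 0 and variance 1/2. Then for every τ > 0 and θ ≥ 0, ∫ (τ‖x‖ − θ)²·𝟙{τ‖x‖ ≥ θ} dμ(x) = (θ²·Γ̄(M, (θ/τ)²) − 2θτ·Γ̄(M + 1/2, (θ/τ)²) + τ²·Γ̄(M + 1, (θ/τ)²)) / Γ(M), where ‖·‖ is the Euclidean norm. -/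
open MeasureTheory ProbabilityTheory

lemma pi_gauss_density (n : ℕ) :
    (Measure.pi fun _ : Fin n => gaussianReal 0 (1 / 2)) =
      (volume : Measure (Fin n → ℝ)).withDensity
        (fun x => ENNReal.ofReal (∏ i, gaussianPDFReal 0 (1 / 2) (x i))) := by

  have hv : (1 / 2 : NNReal) ≠ 0 := by norm_num
  have hint : Integrable (fun x : Fin n → ℝ => ∏ i, gaussianPDFReal 0 (1 / 2) (x i)) :=
    Integrable.fintype_prod (fun _ => integrable_gaussianPDFReal 0 (1 / 2))
  refine Measure.pi_eq fun s hs => ?_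
  rw [withDensity_apply _ (MeasurableSet.univ_pi hs),
    ← ofReal_integral_eq_lintegral_ofReal hint.integrableOn
      (ae_of_all _ fun x => Finset.prod_nonneg fun i _ => gaussianPDFReal_nonneg _ _ _),
    volume_pi, Measure.restrict_pi_pi,
    integral_fintype_prod_eq_prod (fun _ => gaussianPDFReal 0 (1 / 2)),
    ENNReal.ofReal_prod_of_nonneg
      (fun i _ => integral_nonneg fun x => gaussianPDFReal_nonneg _ _ _)]
  refine Finset.prod_congr rfl fun i _ => ?_
  rw [gaussianReal_apply_eq_integral _ hv]

lemma prod_pdf (M : ℕ) (x : Fin (2 * M) → ℝ) :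
    ∏ i, gaussianPDFReal 0 (1 / 2) (x i) = (Real.pi ^ M)⁻¹ * Real.exp (-∑ i, x i ^ 2) := by
  have h : ∀ y : ℝ, gaussianPDFReal 0 (1 / 2) y = (√Real.pi)⁻¹ * Real.exp (-y ^ 2) := by
    intro y
    rw [gaussianPDFReal]
    have a1 : 2 * Real.pi * ((1 / 2 : NNReal) : ℝ) = Real.pi := by push_cast; ring
    have a2 : -(y - 0) ^ 2 / (2 * ((1 / 2 : NNReal) : ℝ)) = -y ^ 2 := by push_cast; ring
    rw [a1, a2]
  simp_rw [h, Finset.prod_mul_distrib, ← Real.exp_sum]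
  simp [pow_mul, Real.sq_sqrt Real.pi_nonneg]

lemma radial (M : ℕ) (hM : 1 ≤ M) (G : ℝ → ℝ) :
    ∫ x, G (√(∑ i, x i ^ 2)) ∂(Measure.pi fun _ : Fin (2 * M) => gaussianReal 0 (1 / 2)) =
      (∫ t in Set.Ioi (0:ℝ), t ^ ((M:ℝ) - 1) * Real.exp (-t) * G (√t)) / Real.Gamma M := by
  have : Nonempty (Fin (2 * M)) := ⟨⟨0, by omega⟩⟩
  have : Nontrivial (EuclideanSpace ℝ (Fin (2 * M))) := inferInstance
  rw [pi_gauss_density, integral_withDensity_eq_integral_toReal_smul (by fun_prop)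
    (ae_of_all _ fun _ => ENNReal.ofReal_lt_top)]
  have h1 : ∀ x : Fin (2 * M) → ℝ,
      (ENNReal.ofReal (∏ i, gaussianPDFReal 0 (1 / 2) (x i))).toReal • G (√(∑ i, x i ^ 2)) =
      (fun r : ℝ => (Real.pi ^ M)⁻¹ * Real.exp (-r ^ 2) * G r)
        ‖(WithLp.toLp 2 x : EuclideanSpace ℝ (Fin (2 * M)))‖ := by
    intro x
    rw [ENNReal.toReal_ofReal (Finset.prod_nonneg fun i _ => gaussianPDFReal_nonneg _ _ _),
      prod_pdf]
    have : ‖(WithLp.toLp 2 x : EuclideanSpace ℝ (Fin (2 * M)))‖ = √(∑ i, x i ^ 2) := by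
      simp [EuclideanSpace.norm_eq]
    simp only [this, smul_eq_mul]
    rw [Real.sq_sqrt (Finset.sum_nonneg fun i _ => sq_nonneg _)]
  simp_rw [h1]
  rw [(PiLp.volume_preserving_toLp (Fin (2 * M))).integral_comp
    (MeasurableEquiv.toLp 2 (Fin (2 * M) → ℝ)).measurableEmbedding
    (fun y => (fun r : ℝ => (Real.pi ^ M)⁻¹ * Real.exp (-r ^ 2) * G r) ‖y‖),
    integral_fun_norm_addHaar volume
      (fun r : ℝ => (Real.pi ^ M)⁻¹ * Real.exp (-r ^ 2) * G r)]
  have hd : Module.finrank ℝ (EuclideanSpace ℝ (Fin (2 * M))) = 2 * M := by simp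
  rw [Measure.real, InnerProductSpace.volume_ball_of_dim_even hd, hd,
    ← integral_comp_rpow_Ioi_of_pos (g := fun t => t ^ ((M:ℝ) - 1) * Real.exp (-t) * G (√t))
      (zero_lt_two)]
  have h2 : ∫ x in Set.Ioi (0:ℝ), ((2:ℝ) * x ^ ((2:ℝ) - 1)) •
        ((x ^ (2:ℝ)) ^ ((M:ℝ) - 1) * Real.exp (-x ^ (2:ℝ)) * G (√(x ^ (2:ℝ)))) =
      ∫ x in Set.Ioi (0:ℝ), (2 * Real.pi ^ M) *
        (x ^ (2 * M - 1) • ((Real.pi ^ M)⁻¹ * Real.exp (-x ^ 2) * G x)) := by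
    refine setIntegral_congr_fun measurableSet_Ioi fun x hx => ?_
    have hx : 0 < x := hx
    have e1 : x ^ (2:ℝ) = x ^ 2 := by norm_cast
    have e2 : (x ^ 2) ^ ((M:ℝ) - 1) = (x ^ 2) ^ (M - 1) := by
      rw [← Real.rpow_natCast _ (M - 1), Nat.cast_sub hM]; simp
    have e3 : x ^ (2 * M - 1) = x * (x ^ 2) ^ (M - 1) := by
      rw [← pow_mul, ← pow_succ']; congr 1; omega
    have e4 : x ^ ((2:ℝ) - 1) = x := by norm_num
    have : Real.pi ^ M ≠ 0 := by positivity
    simp only [e1, e2, e3, e4, Real.sqrt_sq hx.le, smul_eq_mul]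
    field_simp
  rw [h2, integral_const_mul]
  have hG : Real.Gamma M = ((M - 1).factorial : ℝ) := by
    rw [← Real.Gamma_nat_eq_factorial, Nat.cast_sub hM]; simp
  have hf : (M.factorial : ℝ) = M * ((M - 1).factorial : ℝ) := by
    exact_mod_cast (Nat.mul_factorial_pred (by omega)).symm
  have hM0 : (M:ℝ) ≠ 0 := by positivity
  have hf0 : ((M - 1).factorial : ℝ) ≠ 0 := by positivity
  rw [hG]
  simp only [ENNReal.ofReal_one, one_pow, one_mul, nsmul_eq_mul, smul_eq_mul]
  rw [ENNReal.toReal_ofReal (by positivity), hf]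
  push_cast
  field_simp

lemma int_tail (s c : ℝ) (hs : 0 < s) (hc : 0 ≤ c) :
    IntegrableOn (fun t : ℝ => t ^ (s - 1) * Real.exp (-t)) (Set.Ioi c) := by
  have := (Real.GammaIntegral_convergent hs).mono_set (Set.Ioi_subset_Ioi hc)
  simpa [mul_comm] using this

theorem noise_mse_eq
    (M : ℕ) (hM : 1 ≤ M)
    (μ : Measure (Fin (2 * M) → ℝ))
    (hμ : μ = Measure.pi fun _ => gaussianReal 0 (1 / 2)) :
    ∀ (τ θ : ℝ), 0 < τ → 0 ≤ θ →
      (∫ x, (if θ ≤ τ * Real.sqrt (∑ i, x i ^ 2) then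
          (τ * Real.sqrt (∑ i, x i ^ 2) - θ) ^ 2 else 0) ∂μ) =
        (θ ^ 2 * uGamma M ((θ / τ) ^ 2)
          - 2 * θ * τ * uGamma (M + 1 / 2) ((θ / τ) ^ 2)
          + τ ^ 2 * uGamma (M + 1) ((θ / τ) ^ 2)) / Real.Gamma M := by
  intro τ θ hτ hθ
  subst hμ
  rw [radial M hM (fun r => if θ ≤ τ * r then (τ * r - θ) ^ 2 else 0)]
  congr 1
  have hc : 0 ≤ (θ / τ) ^ 2 := by positivity
  have hMr : (0:ℝ) < M := by positivity
  rw [setIntegral_eq_of_subset_of_forall_sdiff_eq_zero measurableSet_Ioi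
    (Set.Ioi_subset_Ioi hc)]
  · have i1 := (int_tail M _ hMr hc).const_mul (θ ^ 2)
    have i2 := (int_tail (M + 1 / 2) _ (by positivity) hc).const_mul (2 * θ * τ)
    have i3 := (int_tail (M + 1) _ (by positivity) hc).const_mul (τ ^ 2)
    unfold uGamma
    rw [← integral_const_mul, ← integral_const_mul, ← integral_const_mul,
      ← integral_sub i1 i2, ← integral_add (by exact i1.sub i2) i3]
    refine setIntegral_congr_fun measurableSet_Ioi fun t ht => ?_
    have ht : (θ / τ) ^ 2 < t := ht
    have ht0 : 0 < t := hc.trans_lt ht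
    have hle : θ ≤ τ * √t := by
      have := (Real.lt_sqrt (by positivity)).2 ht
      rw [div_lt_iff₀ hτ] at this
      linarith
    have e1 : t ^ ((M:ℝ) + 1 / 2 - 1) = t ^ ((M:ℝ) - 1) * √t := by
      rw [Real.sqrt_eq_rpow, ← Real.rpow_add ht0]; congr 1; ring
    have e2 : t ^ ((M:ℝ) + 1 - 1) = t ^ ((M:ℝ) - 1) * √t ^ 2 := by
      rw [Real.sq_sqrt ht0.le]
      nth_rewrite 3 [← Real.rpow_one t]
      rw [← Real.rpow_add ht0]; congr 1; ring
    simp only [if_pos hle, e1, e2]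
    ring
  · intro t ht
    have ht1 : t ≤ (θ / τ) ^ 2 := not_lt.1 ht.2
    have hle : τ * √t ≤ θ := by
      have := (Real.sqrt_le_left (by positivity : 0 ≤ θ / τ)).2 ht1
      rw [le_div_iff₀ hτ] at this
      linarith
    by_cases h : θ ≤ τ * √t
    · have : τ * √t - θ = 0 := by linarith
      simp [this]
    · simp [h]
end

section
/- Fix an integer M ≥ 1, reals τ > 0 and θ > 0, and let μ be the product probability measure on ℝ^{2M} whose 2M coordinates are i.i.d. real Gaussians with mean 0 and variance 1/2. Define the block soft-thresholding operator g(x, θ) = (1 − θ/‖x‖)·x if ‖x‖ ≥ θ and g(x, θ) = 0 otherwise, and the risk R(h) = ∫ ‖g(h + τx, θ) − h‖² dμ(x) for h ∈ ℝ^{2M}. Then for every sequence (h_k) in ℝ^{2M} with ‖h_k‖ → ∞, one has R(h_k) → M·τ² + θ². -/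
open MeasureTheory ProbabilityTheory

lemma bst_bound {E : Type*} [NormedAddCommGroup E] [InnerProductSpace ℝ E] (θ : ℝ) (hθ : 0 < θ)
    (h v : E) :
    ‖(if θ ≤ ‖h + v‖ then (1 - θ / ‖h + v‖) • (h + v) else 0) - h‖ ≤ ‖v‖ + θ := by
  split_ifs with hc
  · have hN : 0 < ‖h + v‖ := hθ.trans_le hc
    have e : (1 - θ / ‖h + v‖) • (h + v) - h = v - (θ / ‖h + v‖) • (h + v) := by
      rw [sub_smul, one_smul]; abel
    rw [e]
    refine (norm_sub_le _ _).trans ?_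
    rw [norm_smul, Real.norm_eq_abs, abs_of_pos (by positivity), div_mul_cancel₀ _ hN.ne']
  · push Not at hc
    have : ‖(h + v) - v‖ ≤ ‖h + v‖ + ‖v‖ := norm_sub_le _ _
    rw [add_sub_cancel_right] at this
    rw [zero_sub, norm_neg]
    linarith

lemma bst_unit {E : Type*} [NormedAddCommGroup E] [InnerProductSpace ℝ E]
    (h v : E) (hh : 0 < ‖h‖) (hy : 0 < ‖h + v‖) :
    ‖‖h + v‖⁻¹ • (h + v) - ‖h‖⁻¹ • h‖ ≤ 2 * ‖v‖ / ‖h‖ := by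
  have e : ‖h + v‖⁻¹ • (h + v) - ‖h‖⁻¹ • h
      = (‖h‖⁻¹ * ((‖h‖ - ‖h + v‖) * ‖h + v‖⁻¹)) • (h + v) + ‖h‖⁻¹ • v := by
    have : ‖h‖⁻¹ * ((‖h‖ - ‖h + v‖) * ‖h + v‖⁻¹) = ‖h + v‖⁻¹ - ‖h‖⁻¹ := by
      field_simp
    rw [this, sub_smul, smul_add ‖h‖⁻¹]; abel
  have h1 : |‖h‖ - ‖h + v‖| ≤ ‖v‖ := by
    have := abs_norm_sub_norm_le h (h + v)
    simpa using this
  rw [e]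
  refine (norm_add_le _ _).trans ?_
  rw [norm_smul, norm_smul, norm_mul, norm_mul, norm_inv, norm_inv, norm_norm, norm_norm,
    Real.norm_eq_abs, mul_assoc, mul_assoc, inv_mul_cancel₀ hy.ne', mul_one, ← mul_add,
    div_eq_inv_mul]
  gcongr
  linarith

lemma bst_lim {E : Type*} [NormedAddCommGroup E] [InnerProductSpace ℝ E] (θ : ℝ) (hθ : 0 < θ)
    (h : ℕ → E) (v : E) (hh : Filter.Tendsto (fun k => ‖h k‖) Filter.atTop Filter.atTop) :
    Filter.Tendsto (fun k =>
      ‖(if θ ≤ ‖h k + v‖ then (1 - θ / ‖h k + v‖) • (h k + v) else 0) - h k‖ ^ 2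
        - (‖v‖ ^ 2 + θ ^ 2 - 2 * θ * inner ℝ v (‖h k‖⁻¹ • h k))) Filter.atTop (nhds 0) := by
  have hz : Filter.Tendsto (fun k => 2 * θ * (‖v‖ * (2 * ‖v‖ / ‖h k‖))) Filter.atTop (nhds 0) := by
    have := ((hh.const_div_atTop (2 * ‖v‖)).const_mul ‖v‖).const_mul (2 * θ)
    simpa using this
  refine squeeze_zero_norm' ?_ hz
  filter_upwards [hh.eventually_ge_atTop (‖v‖ + θ)] with k hk
  have h1 : ‖(h k + v) - v‖ ≤ ‖h k + v‖ + ‖v‖ := norm_sub_le _ _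
  rw [add_sub_cancel_right] at h1
  have hc : θ ≤ ‖h k + v‖ := by linarith
  have hN : 0 < ‖h k + v‖ := hθ.trans_le hc
  have hk0 : 0 < ‖h k‖ := by have := norm_nonneg v; linarith
  rw [if_pos hc]
  have e : (1 - θ / ‖h k + v‖) • (h k + v) - h k = v - θ • (‖h k + v‖⁻¹ • (h k + v)) := by
    rw [sub_smul, one_smul, smul_smul, div_eq_mul_inv]; abel
  have hw : ‖‖h k + v‖⁻¹ • (h k + v)‖ = 1 := by
    rw [norm_smul, norm_inv, norm_norm, inv_mul_cancel₀ hN.ne']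
  have hu := bst_unit (h k) v hk0 hN
  set w := ‖h k + v‖⁻¹ • (h k + v)
  set u := ‖h k‖⁻¹ • h k
  rw [e, norm_sub_sq_real, inner_smul_right, norm_smul, hw, mul_one, Real.norm_eq_abs θ, sq_abs]
  have e2 : ‖v‖ ^ 2 - 2 * (θ * inner ℝ v w) + θ ^ 2 - (‖v‖ ^ 2 + θ ^ 2 - 2 * θ * inner ℝ v u)
      = - (2 * θ * inner ℝ v (w - u)) := by
    rw [inner_sub_right]; ring
  rw [e2, norm_neg, norm_mul, Real.norm_eq_abs (2 * θ), abs_of_pos (by positivity)]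
  gcongr
  exact (norm_inner_le_norm v _).trans (by gcongr)

/-- The risk of the block soft-thresholding denoiser `g(·, θ)` at signal `h` under complex
Gaussian noise (modeled on `ℝ^{2M}` with i.i.d. `N(0, 1/2)` coordinates, Euclidean norm)
tends to `M·τ² + θ²` along any sequence of signals whose norm tends to infinity. -/
theorem risk_tendsto_at_infinite_norm
    (M : ℕ) (hM : 1 ≤ M) (τ θ : ℝ) (hτ : 0 < τ) (hθ : 0 < θ)
    (μ : Measure (Fin (2 * M) → ℝ))
    (hμ : μ = Measure.pi fun _ => gaussianReal 0 (1 / 2))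
    (g : (Fin (2 * M) → ℝ) → ℝ → (Fin (2 * M) → ℝ))
    (hg : ∀ x t, g x t =
      if t ≤ Real.sqrt (∑ i, x i ^ 2) then (1 - t / Real.sqrt (∑ i, x i ^ 2)) • x else 0)
    (R : (Fin (2 * M) → ℝ) → ℝ)
    (hR : ∀ h, R h = ∫ x, (∑ i, (g (h + τ • x) θ i - h i) ^ 2) ∂μ) :
    ∀ h : ℕ → Fin (2 * M) → ℝ,
      Filter.Tendsto (fun k => Real.sqrt (∑ i, h k i ^ 2)) Filter.atTop Filter.atTop →
      Filter.Tendsto (fun k => R (h k)) Filter.atTop (nhds (M * τ ^ 2 + θ ^ 2)) := by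
  intro h hh
  classical
  have hn : ∀ x : Fin (2 * M) → ℝ, Real.sqrt (∑ i, x i ^ 2) = ‖WithLp.toLp 2 x‖ := by
    intro x; rw [EuclideanSpace.norm_eq]; simp
  have hn2 : ∀ x : Fin (2 * M) → ℝ, ∑ i, x i ^ 2 = ‖WithLp.toLp 2 x‖ ^ 2 := by
    intro x; rw [EuclideanSpace.norm_sq_eq]; simp
  have : IsProbabilityMeasure μ := by rw [hμ]; infer_instance
  have hF : ∀ k x, (∑ i, (g (h k + τ • x) θ i - h k i) ^ 2) =
      ‖(if θ ≤ ‖WithLp.toLp 2 (h k) + τ • WithLp.toLp 2 x‖ then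
        (1 - θ / ‖WithLp.toLp 2 (h k) + τ • WithLp.toLp 2 x‖) •
          (WithLp.toLp 2 (h k) + τ • WithLp.toLp 2 x) else 0) - WithLp.toLp 2 (h k)‖ ^ 2 := by
    intro k x
    have := hn2 (g (h k + τ • x) θ - h k)
    simp only [Pi.sub_apply] at this
    rw [this, hg, hn]
    rw [← WithLp.toLp_smul, ← WithLp.toLp_add]
    split_ifs
    · rw [WithLp.toLp_sub, WithLp.toLp_smul]
    · rw [WithLp.toLp_sub, WithLp.toLp_zero]
  simp only [hn] at hh
  have hev : ∀ i : Fin (2 * M), MeasurePreserving (Function.eval i) μ (gaussianReal 0 (1 / 2)) := by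
    intro i; rw [hμ]; exact measurePreserving_eval (fun _ => gaussianReal 0 (1 / 2)) i
  have hi1 : ∀ i : Fin (2 * M), Integrable (fun x : Fin (2 * M) → ℝ => x i) μ := fun i =>
    (hev i).integrable_comp_of_integrable (g := fun y : ℝ => y)
      ((memLp_id_gaussianReal 1).integrable le_rfl)
  have hi2 : ∀ i : Fin (2 * M), Integrable (fun x : Fin (2 * M) → ℝ => x i ^ 2) μ := fun i =>
    (hev i).integrable_comp_of_integrable (g := fun y : ℝ => y ^ 2)
      ((memLp_id_gaussianReal 2).integrable_sq)
  have hm1 : ∀ i : Fin (2 * M), ∫ x, x i ∂μ = 0 := by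
    intro i
    have := integral_map (μ := μ) (hev i).measurable.aemeasurable (f := fun y : ℝ => y)
      (by fun_prop)
    rw [(hev i).map_eq, integral_id_gaussianReal] at this
    exact this.symm
  have hm2 : ∀ i : Fin (2 * M), ∫ x, x i ^ 2 ∂μ = 1 / 2 := by
    intro i
    have := integral_map (μ := μ) (hev i).measurable.aemeasurable (f := fun y : ℝ => y ^ 2)
      (by fun_prop)
    rw [(hev i).map_eq] at this
    have hv := variance_fun_id_gaussianReal (μ := 0) (v := 1 / 2)
    rw [variance_of_integral_eq_zero (by fun_prop) (by simp)] at hv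
    simp only [Function.eval] at this
    rw [← this, hv]; simp
  have hS : Integrable (fun x : Fin (2 * M) → ℝ => ‖WithLp.toLp 2 x‖ ^ 2) μ := by
    simp only [← hn2]
    exact integrable_finsetSum _ fun i _ => hi2 i
  have hSi : ∫ x : Fin (2 * M) → ℝ, ‖WithLp.toLp 2 x‖ ^ 2 ∂μ = M := by
    simp only [← hn2]
    rw [integral_finsetSum _ fun i _ => hi2 i]
    simp only [hm2]
    simp
    ring
  have hL : ∀ u : EuclideanSpace ℝ (Fin (2 * M)),
      Integrable (fun x : Fin (2 * M) → ℝ => inner ℝ (WithLp.toLp 2 x) u) μ := by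
    intro u
    simp only [PiLp.inner_apply]
    exact integrable_finsetSum _ fun i _ => (hi1 i).mul_const (u i) |>.congr
      (by filter_upwards with x; simp [mul_comm])
  have hLi : ∀ u : EuclideanSpace ℝ (Fin (2 * M)),
      ∫ x : Fin (2 * M) → ℝ, inner ℝ (WithLp.toLp 2 x) u ∂μ = 0 := by
    intro u
    simp only [PiLp.inner_apply]
    rw [integral_finsetSum _ fun i _ => (hi1 i).mul_const (u i) |>.congr
      (by filter_upwards with x; simp [mul_comm])]
    apply Finset.sum_eq_zero
    intro i _
    have : ∫ x : Fin (2 * M) → ℝ, x i * u i ∂μ = 0 := by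
      rw [integral_mul_const, hm1, zero_mul]
    rw [← this]
    congr 1; ext x; simp [mul_comm]
  -- the comparison function
  let C : ℕ → (Fin (2 * M) → ℝ) → ℝ := fun k x =>
    ‖τ • WithLp.toLp 2 x‖ ^ 2 + θ ^ 2 - 2 * θ *
      inner ℝ (τ • WithLp.toLp 2 x) (‖WithLp.toLp 2 (h k)‖⁻¹ • WithLp.toLp 2 (h k))
  have hC' : ∀ k x, C k x = τ ^ 2 * ‖WithLp.toLp 2 x‖ ^ 2 + θ ^ 2 - 2 * θ * (τ *
      inner ℝ (WithLp.toLp 2 x) (‖WithLp.toLp 2 (h k)‖⁻¹ • WithLp.toLp 2 (h k))) := by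
    intro k x
    simp only [C]
    rw [norm_smul, real_inner_smul_left, mul_pow, Real.norm_eq_abs, sq_abs]
  have hCint : ∀ k, Integrable (C k) μ := by
    intro k
    rw [funext (hC' k)]
    exact ((hS.const_mul _).add (integrable_const _)).sub (((hL _).const_mul _).const_mul _)
  have hCval : ∀ k, ∫ x, C k x ∂μ = M * τ ^ 2 + θ ^ 2 := by
    intro k
    simp only [hC']
    have hA : Integrable (fun x : Fin (2 * M) → ℝ => τ ^ 2 * ‖WithLp.toLp 2 x‖ ^ 2 + θ ^ 2) μ :=
      (hS.const_mul _).add (integrable_const _)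
    rw [integral_sub hA (((hL _).const_mul _).const_mul _), integral_add (hS.const_mul _) (integrable_const _),
      integral_const_mul, integral_const_mul, integral_const_mul, hLi, hSi]
    simp
    ring
  let F : ℕ → (Fin (2 * M) → ℝ) → ℝ := fun k x => ∑ i, (g (h k + τ • x) θ i - h k i) ^ 2
  have hFm : ∀ k, AEStronglyMeasurable (F k) μ := by
    intro k
    apply Measurable.aestronglyMeasurable
    simp only [F, hF]
    apply Measurable.pow_const
    apply Measurable.norm
    apply Measurable.sub _ measurable_const
    apply Measurable.ite
    · exact measurableSet_le measurable_const (by fun_prop)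
    · fun_prop
    · fun_prop
  let B : (Fin (2 * M) → ℝ) → ℝ := fun x => 2 * (τ ^ 2 * ‖WithLp.toLp 2 x‖ ^ 2 + θ ^ 2)
  have hB : Integrable B μ := ((hS.const_mul _).add (integrable_const _)).const_mul _
  have hFB : ∀ k x, ‖F k x‖ ≤ B x := by
    intro k x
    simp only [F, hF, B]
    have := bst_bound θ hθ (WithLp.toLp 2 (h k)) (τ • WithLp.toLp 2 x)
    rw [norm_smul τ, Real.norm_eq_abs, abs_of_pos hτ] at this
    rw [Real.norm_eq_abs, abs_of_nonneg (by positivity)]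
    refine (pow_le_pow_left₀ (norm_nonneg _) this 2).trans ?_
    nlinarith [sq_nonneg (τ * ‖WithLp.toLp 2 x‖ - θ)]
  have hCB : ∀ k x, ‖C k x‖ ≤ B x := by
    intro k x
    rw [hC']
    simp only [B]
    have h1 := abs_real_inner_le_norm (WithLp.toLp 2 x)
      (‖WithLp.toLp 2 (h k)‖⁻¹ • WithLp.toLp 2 (h k))
    have h2 : ‖‖WithLp.toLp 2 (h k)‖⁻¹ • WithLp.toLp 2 (h k)‖ ≤ 1 := by
      rw [norm_smul, norm_inv, norm_norm]
      exact inv_mul_le_one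
    have h3 := h1.trans (mul_le_of_le_one_right (norm_nonneg _) h2)
    have h4 : |τ * inner ℝ (WithLp.toLp 2 x)
        (‖WithLp.toLp 2 (h k)‖⁻¹ • WithLp.toLp 2 (h k))| ≤ τ * ‖WithLp.toLp 2 x‖ := by
      rw [abs_mul, abs_of_pos hτ]; gcongr
    obtain ⟨h5, h6⟩ := abs_le.1 h4
    rw [Real.norm_eq_abs, abs_le]
    have h7 := mul_le_mul_of_nonneg_left h5 hθ.le
    have h8 := mul_le_mul_of_nonneg_left h6 hθ.le
    constructor <;> nlinarith [sq_nonneg (τ * ‖WithLp.toLp 2 x‖ - θ)]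
  have hFint : ∀ k, Integrable (F k) μ := fun k =>
    hB.mono' (hFm k) (Filter.Eventually.of_forall (hFB k))
  have key : Filter.Tendsto (fun k => ∫ x, (F k x - C k x) ∂μ) Filter.atTop
      (nhds (∫ _, (0 : ℝ) ∂μ)) := by
    apply tendsto_integral_of_dominated_convergence (fun x => B x + B x)
    · exact fun k => (hFm k).sub (hCint k).aestronglyMeasurable
    · exact hB.add hB
    · exact fun k => Filter.Eventually.of_forall fun x =>
        (norm_sub_le _ _).trans (add_le_add (hFB k x) (hCB k x))
    · refine Filter.Eventually.of_forall fun x => ?_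
      simp only [F, hF, C]
      exact bst_lim θ hθ (fun k => WithLp.toLp 2 (h k)) (τ • WithLp.toLp 2 x) hh
  have key2 := key.add_const ((M : ℝ) * τ ^ 2 + θ ^ 2)
  rw [integral_zero, zero_add] at key2
  refine key2.congr fun k => ?_
  rw [integral_sub (hFint k) (hCint k), hCval, hR]
  simp [F]
end

section
/- Let (Ω, F, P) be a probability space and let δ, h, W : Ω → ℝ be mutually independent random variables, where δ takes values in {0, 1} with P(δ = 1) = λ for some λ ∈ (0, 1), h is distributed as the real Gaussian measure with mean 0 and variance γ > 0, and W is distributed as the real Gaussian measure with mean 0 and variance τ² > 0. Set X̃ = δ·h + W. Then, P-almost everywhere, the conditional expectation of δ given the σ-algebra generated by X̃ equals 1 / (1 + ((1−λ)/λ) · √((γ + τ²)/τ²) · exp(−(1/(2τ²) − 1/(2(γ + τ²)))·X̃²)). -/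
open MeasureTheory ProbabilityTheory

/-- pointwise Bayes identity for the densities -/
lemma bayes_pt (lam γ τ : ℝ) (hlam : lam ∈ Set.Ioo (0 : ℝ) 1) (hγ : 0 < γ) (hτ : 0 < τ) (x : ℝ) :
    (lam * gaussianPDFReal 0 (γ.toNNReal + (τ^2).toNNReal) x
      + (1 - lam) * gaussianPDFReal 0 (τ^2).toNNReal x) *
    (1 / (1 + (1 - lam) / lam * Real.sqrt ((γ + τ ^ 2) / τ ^ 2)
        * Real.exp (-(1 / (2 * τ ^ 2) - 1 / (2 * (γ + τ ^ 2))) * x ^ 2)))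
    = lam * gaussianPDFReal 0 (γ.toNNReal + (τ^2).toNNReal) x := by
  obtain ⟨h0, h1⟩ := hlam
  have hτ2 : 0 < τ ^ 2 := by positivity
  have h1' : 0 < 1 - lam := by linarith
  have key : gaussianPDFReal 0 (τ^2).toNNReal x =
      gaussianPDFReal 0 (γ.toNNReal + (τ^2).toNNReal) x *
      (Real.sqrt ((γ + τ ^ 2) / τ ^ 2)
        * Real.exp (-(1 / (2 * τ ^ 2) - 1 / (2 * (γ + τ ^ 2))) * x ^ 2)) := by
    simp only [gaussianPDFReal, NNReal.coe_add, Real.coe_toNNReal _ hγ.le,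
      Real.coe_toNNReal _ hτ2.le, sub_zero]
    rw [show ∀ a b c d : ℝ, a * b * (c * d) = (a * c) * (b * d) by intros; ring, ← Real.exp_add]
    congr 1
    · rw [← Real.sqrt_inv, ← Real.sqrt_inv, ← Real.sqrt_mul (by positivity)]
      congr 1
      have := Real.pi_pos
      field_simp
    · congr 1
      field_simp
      ring
  rw [key]
  have : 0 < 1 + (1 - lam) / lam * Real.sqrt ((γ + τ ^ 2) / τ ^ 2)
        * Real.exp (-(1 / (2 * τ ^ 2) - 1 / (2 * (γ + τ ^ 2))) * x ^ 2) := by positivity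
  rw [mul_one_div, div_eq_iff this.ne']
  generalize Real.sqrt _ = s
  generalize Real.exp _ = e
  field_simp

theorem bernoulli_gaussian_posterior
    {Ω : Type*} [MeasurableSpace Ω] (P : Measure Ω) [IsProbabilityMeasure P]
    (δ h W : Ω → ℝ) (hδm : Measurable δ) (hhm : Measurable h) (hWm : Measurable W)
    (hindep : iIndepFun ![δ, h, W] P)
    (lam γ τ : ℝ) (hlam : lam ∈ Set.Ioo (0 : ℝ) 1) (hγ : 0 < γ) (hτ : 0 < τ)
    (hδval : ∀ ω, δ ω = 0 ∨ δ ω = 1)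
    (hδlaw : (P {ω | δ ω = 1}).toReal = lam)
    (hhlaw : Measure.map h P = gaussianReal 0 γ.toNNReal)
    (hWlaw : Measure.map W P = gaussianReal 0 (τ ^ 2).toNNReal) :
    P[δ | MeasurableSpace.comap (fun ω => δ ω * h ω + W ω) inferInstance]
      =ᵐ[P] fun ω => 1 / (1 + (1 - lam) / lam * Real.sqrt ((γ + τ ^ 2) / τ ^ 2)
        * Real.exp (-(1 / (2 * τ ^ 2) - 1 / (2 * (γ + τ ^ 2)))
          * (δ ω * h ω + W ω) ^ 2)) := by
  obtain ⟨hl0, hl1⟩ := id hlam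
  have hτ2 : 0 < τ ^ 2 := by positivity
  have bayes := bayes_pt lam γ τ hlam hγ hτ
  set X : Ω → ℝ := fun ω => δ ω * h ω + W ω with hX
  have hXm : Measurable X := by fun_prop
  set g : ℝ → ℝ := fun x => 1 / (1 + (1 - lam) / lam * Real.sqrt ((γ + τ ^ 2) / τ ^ 2)
        * Real.exp (-(1 / (2 * τ ^ 2) - 1 / (2 * (γ + τ ^ 2))) * x ^ 2)) with hg
  have hgm : Measurable g := by fun_prop
  have hgb : ∀ x, ‖g x‖ ≤ 1 := by
    intro x
    have h1' : 0 < 1 - lam := by linarith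
    have : 0 ≤ (1 - lam) / lam * Real.sqrt ((γ + τ ^ 2) / τ ^ 2)
        * Real.exp (-(1 / (2 * τ ^ 2) - 1 / (2 * (γ + τ ^ 2))) * x ^ 2) := by positivity
    rw [hg, Real.norm_eq_abs, abs_of_nonneg (by positivity)]
    rw [div_le_one (by positivity)]
    linarith
  set N1 := gaussianReal 0 (γ.toNNReal + (τ^2).toNNReal) with hN1
  set N0 := gaussianReal 0 (τ^2).toNNReal with hN0
  have hv0 : (τ^2).toNNReal ≠ 0 := by simpa using hτ.ne'
  have hv1 : γ.toNNReal + (τ^2).toNNReal ≠ 0 := by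
    intro h; exact hv0 (add_eq_zero.1 h).2
  have i0 : IndepFun δ W P := by
    simpa using hindep.indepFun (i := 0) (j := 2) (by decide)
  have ihW : IndepFun h W P := by
    simpa using hindep.indepFun (i := 1) (j := 2) (by decide)
  have hmeas : ∀ i, Measurable (![δ, h, W] i) := by
    intro i; fin_cases i <;> simpa
  have i1 : IndepFun δ (h + W) P := by
    simpa using hindep.indepFun_add_right hmeas 0 1 2 (by decide) (by decide)
  have hsum : P.map (h + W) = N1 := by
    simpa using gaussianReal_add_gaussianReal_of_indepFun ihW hhlaw hWlaw
  have hp1 : P (δ ⁻¹' {1}) = ENNReal.ofReal lam := by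
    rw [← hδlaw, ENNReal.ofReal_toReal (measure_ne_top _ _)]; rfl
  have hcompl : δ ⁻¹' {0} = (δ ⁻¹' {1})ᶜ := by
    ext ω; rcases hδval ω with h | h <;> simp [h]
  have hp0 : P (δ ⁻¹' {0}) = ENNReal.ofReal (1 - lam) := by
    rw [hcompl, prob_compl_eq_one_sub (hδm (measurableSet_singleton _)), hp1,
      ENNReal.ofReal_sub _ hl0.le, ENNReal.ofReal_one]
  have j1 : ∀ B, MeasurableSet B → P (δ ⁻¹' {1} ∩ X ⁻¹' B) = ENNReal.ofReal lam * N1 B := by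
    intro B hB
    have : δ ⁻¹' {1} ∩ X ⁻¹' B = δ ⁻¹' {1} ∩ (h + W) ⁻¹' B := by
      ext ω; simp +contextual [hX]
    rw [this, i1.measure_inter_preimage_eq_mul _ _ (measurableSet_singleton _) hB, hp1,
      ← hsum, Measure.map_apply (by fun_prop) hB]
  have j0 : ∀ B, MeasurableSet B → P (δ ⁻¹' {0} ∩ X ⁻¹' B) = ENNReal.ofReal (1 - lam) * N0 B := by
    intro B hB
    have : δ ⁻¹' {0} ∩ X ⁻¹' B = δ ⁻¹' {0} ∩ W ⁻¹' B := by
      ext ω; simp +contextual [hX]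
    rw [this, i0.measure_inter_preimage_eq_mul _ _ (measurableSet_singleton _) hB, hp0,
      ← hWlaw, Measure.map_apply (by fun_prop) hB]
  have hmap : P.map X = ENNReal.ofReal lam • N1 + ENNReal.ofReal (1 - lam) • N0 := by
    ext B hB
    rw [Measure.map_apply hXm hB]
    simp only [Measure.add_apply, Measure.smul_apply, smul_eq_mul]
    rw [← j1 B hB, ← j0 B hB, hcompl, Set.inter_comm, Set.inter_comm _ (X ⁻¹' B), 
      ← Set.sdiff_eq, measure_inter_add_sdiff _ (hδm (measurableSet_singleton _))]
  have hδi : Integrable δ P := by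
    refine Integrable.of_bound hδm.aestronglyMeasurable 1 (ae_of_all _ fun ω => ?_)
    rcases hδval ω with h | h <;> simp [h]
  have hgi : ∀ (μ : Measure ℝ) [IsFiniteMeasure μ], Integrable g μ := fun μ _ =>
    Integrable.of_bound hgm.aestronglyMeasurable 1 (ae_of_all _ hgb)
  have hXg : Integrable (fun ω => g (X ω)) P :=
    Integrable.of_bound (hgm.comp hXm).aestronglyMeasurable 1 (ae_of_all _ fun ω => hgb _)
  symm
  refine ae_eq_condExp_of_forall_setIntegral_eq hXm.comap_le hδi (fun s _ _ => hXg.integrableOn)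
    ?_ (hgm.comp (comap_measurable X)).aestronglyMeasurable
  rintro s ⟨B, hB, rfl⟩ -
  have hR : ∫ ω in X ⁻¹' B, δ ω ∂P = lam * N1.real B := by
    have : δ = (δ ⁻¹' {1}).indicator 1 := by
      ext ω; rcases hδval ω with h | h <;> simp [h, Set.indicator]
    calc _ = ∫ ω in X ⁻¹' B, (δ ⁻¹' {1}).indicator 1 ω ∂P := by rw [← this]
      _ = _ := by
        rw [integral_indicator_one (hδm (measurableSet_singleton _)), 
          measureReal_restrict_apply (hδm (measurableSet_singleton _)), measureReal_def, j1 B hB,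
          ENNReal.toReal_mul, ENNReal.toReal_ofReal hl0.le, measureReal_def]
  rw [hR, ← setIntegral_map hB hgm.aestronglyMeasurable hXm.aemeasurable, hmap,
    Measure.restrict_add, Measure.restrict_smul, Measure.restrict_smul,
    integral_add_measure ((hgi _).smul_measure (by simp)) ((hgi _).smul_measure (by simp)),
    integral_smul_measure, integral_smul_measure, ENNReal.toReal_ofReal hl0.le,
    ENNReal.toReal_ofReal (by linarith), ← integral_indicator_one hB, ← integral_indicator hB,
    ← integral_indicator hB, hN1, hN0, integral_gaussianReal_eq_integral_smul hv0,
    integral_gaussianReal_eq_integral_smul hv1, integral_gaussianReal_eq_integral_smul hv1]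
  have hint : ∀ v, Integrable (fun x => gaussianPDFReal 0 v x • B.indicator g x) := fun v => by
    refine (integrable_gaussianPDFReal 0 v).mul_bdd (c := 1)
      (hgm.indicator hB).aestronglyMeasurable (ae_of_all _ fun x => ?_)
    exact (norm_indicator_le_norm_self _ _).trans (hgb x)
  simp only [smul_eq_mul] at hint ⊢
  rw [← integral_const_mul, ← integral_const_mul, ← integral_const_mul,
    ← integral_add ((hint _).const_mul _) ((hint _).const_mul _)]
  congr 1
  ext x
  by_cases hx : x ∈ B
  · simp only [hx, Set.indicator_of_mem, Pi.one_apply, mul_one]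
    rw [← bayes x]
    ring
  · simp [hx]
end

section
/- Let (Ω, F, P) be a probability space. Let δ₁, δ₂ : Ω → {0, 1} and h₁, h₂, W₁, W₂ : Ω → ℝ be random variables such that: the pair (δ₁, δ₂) is independent of the quadruple (h₁, h₂, W₁, W₂); h₁, h₂, W₁, W₂ are mutually independent with h₁ and h₂ distributed as the real Gaussian measure N(0, γ) with γ > 0, W₁ distributed as N(0, s₁²) and W₂ distributed as N(0, s₂²) with s₁, s₂ > 0; and P(δ₁ = 1) = λ ∈ (0, 1), P(δ₂ = 1 and δ₁ = 1) = α·λ, P(δ₂ = 1 and δ₁ = 0) = β·(1−λ), with α, β ∈ [0, 1]. Then the law of the ℝ²-valued random variable (δ₂·h₂ + W₂, δ₁·h₁ + W₁) equals the mixture measure α·λ·(N(0, γ + s₂²) ⊗ N(0, γ + s₁²)) + (1−α)·λ·(N(0, s₂²) ⊗ N(0, γ + s₁²)) + β·(1−λ)·(N(0, γ + s₂²) ⊗ N(0, s₁²)) + (1−β)·(1−λ)·(N(0, s₂²) ⊗ N(0, s₁²)), where ⊗ denotes the product of measures. -/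
open MeasureTheory ProbabilityTheory

/-- Conditioning on a value of an independent discrete variable. -/
lemma indep_slice_measure {Ω E F : Type*} [MeasurableSpace Ω] [MeasurableSpace E]
    [MeasurableSpace F] [MeasurableSingletonClass E] (P : Measure Ω)
    (D : Ω → E) (H : Ω → F) (hH : Measurable H)
    (h : IndepFun D H P) (d : E) (g : F → ℝ × ℝ) (hg : Measurable g)
    (s : Set (ℝ × ℝ)) (hs : MeasurableSet s) :
    P ({ω | D ω = d} ∩ {ω | g (H ω) ∈ s}) =
      P {ω | D ω = d} * Measure.map (fun ω => g (H ω)) P s := by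
  rw [Measure.map_apply (show Measurable (fun ω => g (H ω)) from hg.comp hH) hs]
  exact h.measure_inter_preimage_eq_mul {d} (g ⁻¹' s) (measurableSet_singleton d) (hg hs)

/-- Scalar form of the joint-density computation in Appendix C of the paper: under the
temporally correlated Bernoulli–Gaussian model, the pair of noisy pseudo-observations over
two consecutive coherence blocks is a four-component Gaussian mixture with weights
`αλ, (1−α)λ, β(1−λ), (1−β)(1−λ)`. -/
theorem joint_law_gaussian_mixture
    {Ω : Type*} [MeasurableSpace Ω] (P : Measure Ω) [IsProbabilityMeasure P]
    (δ₁ δ₂ h₁ h₂ W₁ W₂ : Ω → ℝ)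
    (hδ₁m : Measurable δ₁) (hδ₂m : Measurable δ₂) (hh₁m : Measurable h₁)
    (hh₂m : Measurable h₂) (hW₁m : Measurable W₁) (hW₂m : Measurable W₂)
    (γ s₁ s₂ lam alp bet : ℝ) (hγ : 0 < γ) (hs₁ : 0 < s₁) (hs₂ : 0 < s₂)
    (hlam : lam ∈ Set.Ioo (0 : ℝ) 1) (halp : alp ∈ Set.Icc (0 : ℝ) 1)
    (hbet : bet ∈ Set.Icc (0 : ℝ) 1)
    (hindep : IndepFun (fun ω => (δ₁ ω, δ₂ ω)) (fun ω => (h₁ ω, h₂ ω, W₁ ω, W₂ ω)) P)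
    (hiid : iIndepFun ![h₁, h₂, W₁, W₂] P)
    (hh₁law : Measure.map h₁ P = gaussianReal 0 γ.toNNReal)
    (hh₂law : Measure.map h₂ P = gaussianReal 0 γ.toNNReal)
    (hW₁law : Measure.map W₁ P = gaussianReal 0 (s₁ ^ 2).toNNReal)
    (hW₂law : Measure.map W₂ P = gaussianReal 0 (s₂ ^ 2).toNNReal)
    (hδ₁val : ∀ ω, δ₁ ω = 0 ∨ δ₁ ω = 1) (hδ₂val : ∀ ω, δ₂ ω = 0 ∨ δ₂ ω = 1)
    (hδ₁law : P {ω | δ₁ ω = 1} = ENNReal.ofReal lam)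
    (hδ₂₁law : P {ω | δ₂ ω = 1 ∧ δ₁ ω = 1} = ENNReal.ofReal (alp * lam))
    (hδ₂₀law : P {ω | δ₂ ω = 1 ∧ δ₁ ω = 0} = ENNReal.ofReal (bet * (1 - lam))) :
    Measure.map (fun ω => (δ₂ ω * h₂ ω + W₂ ω, δ₁ ω * h₁ ω + W₁ ω)) P =
      ENNReal.ofReal (alp * lam) •
        ((gaussianReal 0 (γ + s₂ ^ 2).toNNReal).prod (gaussianReal 0 (γ + s₁ ^ 2).toNNReal))
      + ENNReal.ofReal ((1 - alp) * lam) •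
        ((gaussianReal 0 (s₂ ^ 2).toNNReal).prod (gaussianReal 0 (γ + s₁ ^ 2).toNNReal))
      + ENNReal.ofReal (bet * (1 - lam)) •
        ((gaussianReal 0 (γ + s₂ ^ 2).toNNReal).prod (gaussianReal 0 (s₁ ^ 2).toNNReal))
      + ENNReal.ofReal ((1 - bet) * (1 - lam)) •
        ((gaussianReal 0 (s₂ ^ 2).toNNReal).prod (gaussianReal 0 (s₁ ^ 2).toNNReal)) := by
  have hi : IndepFun (fun ω => (h₂ ω, W₂ ω)) (fun ω => (h₁ ω, W₁ ω)) P := by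
    have := hiid.indepFun_prodMk_prodMk (by
      intro i; fin_cases i <;> simpa) 1 3 0 2 (by decide) (by decide) (by decide) (by decide)
    simpa using this
  have i1 : IndepFun h₁ W₁ P := by
    simpa using hiid.indepFun (i := 0) (j := 2) (by decide)
  have i2 : IndepFun h₂ W₂ P := by
    simpa using hiid.indepFun (i := 1) (j := 3) (by decide)
  have l1 : Measure.map (fun ω => h₁ ω + W₁ ω) P = gaussianReal 0 (γ + s₁ ^ 2).toNNReal := by
    have := gaussianReal_add_gaussianReal_of_indepFun i1 hh₁law hW₁law
    rw [Real.toNNReal_add hγ.le (by positivity)]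
    rw [add_zero] at this
    exact this
  have l2 : Measure.map (fun ω => h₂ ω + W₂ ω) P = gaussianReal 0 (γ + s₂ ^ 2).toNNReal := by
    have := gaussianReal_add_gaussianReal_of_indepFun i2 hh₂law hW₂law
    rw [Real.toNNReal_add hγ.le (by positivity)]
    rw [add_zero] at this
    exact this
  have joint : ∀ a b : ℝ, Measure.map (fun ω => (b * h₂ ω + W₂ ω, a * h₁ ω + W₁ ω)) P =
      (Measure.map (fun ω => b * h₂ ω + W₂ ω) P).prod
        (Measure.map (fun ω => a * h₁ ω + W₁ ω) P) := by
    intro a b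
    have hab : IndepFun (fun ω => b * h₂ ω + W₂ ω) (fun ω => a * h₁ ω + W₁ ω) P :=
      hi.comp (φ := fun p : ℝ × ℝ => b * p.1 + p.2) (ψ := fun p : ℝ × ℝ => a * p.1 + p.2)
        (by fun_prop) (by fun_prop)
    exact (indepFun_iff_map_prod_eq_prod_map_map (by fun_prop) (by fun_prop)).1 hab
  have hE : ∀ a b : ℝ, MeasurableSet {ω | δ₂ ω = b ∧ δ₁ ω = a} := fun a b =>
    (hδ₂m (measurableSet_singleton b)).inter (hδ₁m (measurableSet_singleton a))
  have slice : ∀ a b : ℝ, ∀ s : Set (ℝ × ℝ), MeasurableSet s →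
      P ({ω | δ₂ ω = b ∧ δ₁ ω = a} ∩
        {ω | (δ₂ ω * h₂ ω + W₂ ω, δ₁ ω * h₁ ω + W₁ ω) ∈ s}) =
      P {ω | δ₂ ω = b ∧ δ₁ ω = a} *
        ((Measure.map (fun ω => b * h₂ ω + W₂ ω) P).prod
        (Measure.map (fun ω => a * h₁ ω + W₁ ω) P)) s := by
    intro a b s hs
    have := indep_slice_measure P _ _ (by fun_prop) hindep (a, b)
      (fun p => (b * p.2.1 + p.2.2.2, a * p.1 + p.2.2.1)) (by fun_prop) s hs
    rw [← joint a b]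
    have e : {ω | δ₂ ω = b ∧ δ₁ ω = a} = {ω | (δ₁ ω, δ₂ ω) = (a, b)} := by
      ext ω; simp [and_comm]
    rw [e, ← this]
    congr 1
    ext ω
    simp only [Set.mem_inter_iff, Set.mem_ofPred_eq, Prod.mk.injEq]
    constructor
    · rintro ⟨⟨rfl, rfl⟩, h⟩; exact ⟨⟨rfl, rfl⟩, h⟩
    · rintro ⟨⟨rfl, rfl⟩, h⟩; exact ⟨⟨rfl, rfl⟩, h⟩
  obtain ⟨hl0, hl1⟩ := hlam
  obtain ⟨ha0, ha1⟩ := halp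
  obtain ⟨hb0, hb1⟩ := hbet
  -- weights of the two remaining cases
  have w01 : P {ω | δ₂ ω = 0 ∧ δ₁ ω = 1} = ENNReal.ofReal ((1 - alp) * lam) := by
    have e : {ω | δ₂ ω = 0 ∧ δ₁ ω = 1} = {ω | δ₁ ω = 1} \ {ω | δ₂ ω = 1 ∧ δ₁ ω = 1} := by
      ext ω
      rcases hδ₁val ω with h | h <;> rcases hδ₂val ω with h' | h' <;> simp [h, h']
    rw [e, measure_sdiff (show {ω | δ₂ ω = 1 ∧ δ₁ ω = 1} ⊆ {ω | δ₁ ω = 1} from fun ω h => h.2)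
      (hE 1 1).nullMeasurableSet (measure_ne_top _ _),
      hδ₁law, hδ₂₁law, ← ENNReal.ofReal_sub _ (by positivity)]
    congr 1; ring
  have w0 : P {ω | δ₁ ω = 0} = ENNReal.ofReal (1 - lam) := by
    have e : {ω | δ₁ ω = 0} = {ω | δ₁ ω = 1}ᶜ := by
      ext ω
      rcases hδ₁val ω with h | h <;> simp [h]
    rw [e, prob_compl_eq_one_sub (show MeasurableSet {ω | δ₁ ω = 1} from hδ₁m (measurableSet_singleton 1)), hδ₁law,
      ENNReal.ofReal_sub _ hl0.le, ENNReal.ofReal_one]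
  have w00 : P {ω | δ₂ ω = 0 ∧ δ₁ ω = 0} = ENNReal.ofReal ((1 - bet) * (1 - lam)) := by
    have e : {ω | δ₂ ω = 0 ∧ δ₁ ω = 0} = {ω | δ₁ ω = 0} \ {ω | δ₂ ω = 1 ∧ δ₁ ω = 0} := by
      ext ω
      rcases hδ₁val ω with h | h <;> rcases hδ₂val ω with h' | h' <;> simp [h, h']
    rw [e, measure_sdiff (show {ω | δ₂ ω = 1 ∧ δ₁ ω = 0} ⊆ {ω | δ₁ ω = 0} from fun ω h => h.2)
      (hE 0 1).nullMeasurableSet (measure_ne_top _ _),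
      w0, hδ₂₀law, ← ENNReal.ofReal_sub _ (mul_nonneg hb0 (by linarith))]
    congr 1; ring
  ext s hs
  have hm : Measurable (fun ω => (δ₂ ω * h₂ ω + W₂ ω, δ₁ ω * h₁ ω + W₁ ω)) := by fun_prop
  have s11 := slice 1 1 s hs
  have s01 := slice 1 0 s hs
  have s10 := slice 0 1 s hs
  have s00 := slice 0 0 s hs
  simp only [one_mul, zero_mul, zero_add, l1, l2, hW₁law, hW₂law, hδ₂₁law, hδ₂₀law, w01, w00]
    at s11 s01 s10 s00
  rw [Measure.map_apply hm hs]
  simp only [Measure.add_apply, Measure.smul_apply, smul_eq_mul]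
  rw [← s11, ← s01, ← s10, ← s00]
  set A : Set Ω := (fun ω => (δ₂ ω * h₂ ω + W₂ ω, δ₁ ω * h₁ ω + W₁ ω)) ⁻¹' s with hA
  have hAm : MeasurableSet A := hm hs
  change P A = P ({ω | δ₂ ω = 1 ∧ δ₁ ω = 1} ∩ A) + P ({ω | δ₂ ω = 0 ∧ δ₁ ω = 1} ∩ A)
    + P ({ω | δ₂ ω = 1 ∧ δ₁ ω = 0} ∩ A) + P ({ω | δ₂ ω = 0 ∧ δ₁ ω = 0} ∩ A)
  rw [← measure_union _ ((hE 1 0).inter hAm), ← measure_union _ ((hE 0 1).inter hAm),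
    ← measure_union _ ((hE 0 0).inter hAm)]
  · congr 1
    ext ω
    rcases hδ₁val ω with h | h <;> rcases hδ₂val ω with h' | h' <;> simp [h, h']
  all_goals
    rw [Set.disjoint_left]
    intro ω
    rcases hδ₁val ω with h | h <;> rcases hδ₂val ω with h' | h' <;> simp [h, h']
end
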